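/- Let m ≥ 2, let F_m be a free group with free basis A of size m, and let R be a normal subgroup of F_m. Suppose w₁ and w₂ are words over A^{±1} whose corresponding paths in the Cayley graph of F_m/R (starting at the identity) are self-avoiding. If w₁ and w₂ label distinct paths (i.e., are distinct words), then w₁ and w₂ represent distinct elements of F_m/R'; moreover, the path in the Cayley graph of F_m/R' labelled by such a word w is geodesic, so the element of F_m/R' represented by w has word length exactly |w| with respect to the images of A. -/

import Mathlib

open Filter Topology

/-- Evaluate a word over the alphabet `A^{±1}` (a letter is a pair `(i, b)`, where
`b = true` means the generator `σ i` and `b = false` means its inverse) in a group. -/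
def wordEval {m : ℕ} {G : Type*} [Group G] (σ : Fin m → G)
    (w : List (Fin m × Bool)) : G :=
  (w.map fun ℓ => if ℓ.2 then σ ℓ.1 else (σ ℓ.1)⁻¹).prod

/-- The ball `B(n) = {g ∈ G : ℓ(g) ≤ n}` of radius `n` in a group with respect to the
generating map `σ`: the set of elements represented by words of length at most `n`. -/
def ball {m : ℕ} {G : Type*} [Group G] (σ : Fin m → G) (n : ℕ) : Set G :=
  {g | ∃ w : List (Fin m × Bool), w.length ≤ n ∧ wordEval σ w = g}

/-- The growth rate `ω(G, A) = lim_{n→∞} |B(n)|^{1/n}`; the limit exists by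
submultiplicativity of `|B(n)|`, hence equals the `limsup`. -/
noncomputable def growthRate {m : ℕ} {G : Type*} [Group G] (σ : Fin m → G) : ℝ :=
  Filter.limsup (fun n : ℕ => ((ball σ n).ncard : ℝ) ^ (1 / (n : ℝ))) Filter.atTop

/-- The word length `ℓ(g)` of `g` with respect to the generating map `σ`: the length of
a shortest word in the generators and their inverses representing `g`. -/
noncomputable def wordLength {m : ℕ} {G : Type*} [Group G] (σ : Fin m → G) (g : G) : ℕ :=
  sInf {n | ∃ w : List (Fin m × Bool), w.length = n ∧ wordEval σ w = g}

/-- The path in the Cayley graph of `F_m/R` (w.r.t. the images of the free basis)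
starting at the identity and labelled by the word `w` is *self-avoiding*: the vertices
it visits, i.e. the images in `F_m/R` of the prefixes of `w`, are pairwise distinct. -/
def SelfAvoiding {m : ℕ} (R : Subgroup (FreeGroup (Fin m)))
    (w : List (Fin m × Bool)) : Prop :=
  ∀ i j : ℕ, i ≤ w.length → j ≤ w.length →
    (QuotientGroup.mk (FreeGroup.mk (w.take i)) : FreeGroup (Fin m) ⧸ R) =
      QuotientGroup.mk (FreeGroup.mk (w.take j)) → i = j

section Helpers

open Classical in
/-- The wreath-product (Magnus-type) homomorphism recording the flow of a word. -/
noncomputable def flowHom {m : ℕ} (R : Subgroup (FreeGroup (Fin m))) [R.Normal] :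
    FreeGroup (Fin m) →*
      RegularWreathProduct (Multiplicative (Fin m → ℤ)) (FreeGroup (Fin m) ⧸ R) :=
  FreeGroup.lift fun j =>
    ⟨fun q => Multiplicative.ofAdd fun i => if q = 1 ∧ i = j then 1 else 0,
      QuotientGroup.mk (FreeGroup.of j)⟩

/-- The vertex of the Cayley graph reached by a word. -/
def vtx {m : ℕ} (R : Subgroup (FreeGroup (Fin m))) [R.Normal] (w : List (Fin m × Bool)) :
    FreeGroup (Fin m) ⧸ R := QuotientGroup.mk (FreeGroup.mk w)

/-- The flow of a word. -/
noncomputable def flow {m : ℕ} (R : Subgroup (FreeGroup (Fin m))) [R.Normal]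
    (w : List (Fin m × Bool)) (e : (FreeGroup (Fin m) ⧸ R) × Fin m) : ℤ :=
  Multiplicative.toAdd ((flowHom R (FreeGroup.mk w)).left e.1) e.2

/-- The positively oriented edge traversed by a letter read at the identity. -/
def edge0 {m : ℕ} (R : Subgroup (FreeGroup (Fin m))) [R.Normal] (x : Fin m × Bool) :
    (FreeGroup (Fin m) ⧸ R) × Fin m :=
  (if x.2 then 1 else vtx R [x], x.1)

/-- The sign of a letter. -/
def sgn {m : ℕ} (x : Fin m × Bool) : ℤ := if x.2 then 1 else -1

variable {m : ℕ} (R : Subgroup (FreeGroup (Fin m))) [R.Normal]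

lemma vtx_append (u v : List (Fin m × Bool)) : vtx R (u ++ v) = vtx R u * vtx R v := by
  simp only [vtx, ← FreeGroup.mul_mk, QuotientGroup.mk_mul]

lemma vtx_nil : vtx R ([] : List (Fin m × Bool)) = 1 := rfl

lemma flowHom_right (g : FreeGroup (Fin m)) :
    (flowHom R g).right = QuotientGroup.mk g := by
  have : (RegularWreathProduct.rightHom).comp (flowHom R) = QuotientGroup.mk' R := by
    ext j
    simp [flowHom]
  exact DFunLike.congr_fun this g

lemma commutator_le_ker : ⁅R, R⁆ ≤ (flowHom R).ker := by
  rw [Subgroup.commutator_le]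
  intro a ha b hb
  rw [MonoidHom.mem_ker, map_commutatorElement, commutatorElement_eq_one_iff_mul_comm]
  have h1 : (flowHom R a).right = 1 := by
    rw [flowHom_right]; exact (QuotientGroup.eq_one_iff a).2 ha
  have h2 : (flowHom R b).right = 1 := by
    rw [flowHom_right]; exact (QuotientGroup.eq_one_iff b).2 hb
  apply RegularWreathProduct.ext
  · funext x
    simp [h1, h2, mul_comm]
  · simp [h1, h2]

lemma flow_eq_of_mk_eq {u v : List (Fin m × Bool)}
    (h : (QuotientGroup.mk (FreeGroup.mk u) : FreeGroup (Fin m) ⧸ (⁅R, R⁆ : Subgroup _)) =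
      QuotientGroup.mk (FreeGroup.mk v)) : flow R u = flow R v := by
  have h1 := commutator_le_ker R (QuotientGroup.eq.1 h)
  rw [MonoidHom.mem_ker, map_mul, map_inv, inv_mul_eq_one] at h1
  funext e
  simp only [flow, h1]

lemma flow_nil (e) : flow R ([] : List (Fin m × Bool)) e = 0 := by
  simp [flow, ← FreeGroup.one_eq_mk]

lemma flow_append (u v : List (Fin m × Bool)) (e) :
    flow R (u ++ v) e = flow R u e + flow R v ((vtx R u)⁻¹ * e.1, e.2) := by
  simp [flow, ← FreeGroup.mul_mk, flowHom_right, vtx]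

open Classical in
lemma flow_single (x : Fin m × Bool) (e) :
    flow R [x] e = if e = edge0 R x then sgn x else 0 := by
  obtain ⟨j, b⟩ := x
  obtain ⟨q, i⟩ := e
  have hc : ∀ a : FreeGroup (Fin m) ⧸ R, a * q = 1 ↔ q = a⁻¹ := fun a => by
    rw [mul_eq_one_iff_inv_eq, eq_comm]
  cases b
  · have : vtx R [(j, false)] = (QuotientGroup.mk (FreeGroup.of j))⁻¹ := by
      rfl
    simp only [flow, flowHom, edge0, sgn, FreeGroup.lift_mk, this, Prod.mk.injEq]
    simp [hc]
    split_ifs <;> simp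
  · simp [flow, flowHom, edge0, sgn, FreeGroup.lift_mk, Prod.mk.injEq]

lemma flow_concat_eq (u : List (Fin m × Bool)) (x) : ∃ e, ∃ s : ℤ, |s| = 1 ∧
    e.2 = x.1 ∧ (e.1 = vtx R u ∧ e.1 * vtx R [(x.1, true)] = vtx R (u ++ [x]) ∨
      e.1 = vtx R (u ++ [x]) ∧ e.1 * vtx R [(x.1, true)] = vtx R u) ∧
    flow R (u ++ [x]) e = flow R u e + s ∧
    ∀ e', e' ≠ e → flow R (u ++ [x]) e' = flow R u e' := by
  classical
  refine ⟨(vtx R u * (edge0 R x).1, x.1), sgn x, ?_, rfl, ?_, ?_, ?_⟩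
  · unfold sgn; split_ifs <;> simp
  · obtain ⟨j, b⟩ := x
    cases b
    · right
      have : vtx R [(j, false)] = (vtx R [(j, true)])⁻¹ := rfl
      simp [edge0, vtx_append, this]
    · left
      simp [edge0, vtx_append]
  · rw [flow_append, flow_single]
    simp [edge0]
  · intro e' he
    rw [flow_append, flow_single, if_neg, add_zero]
    intro h
    apply he
    rw [← h]
    ext <;> simp
    rw [Prod.ext_iff] at h
    exact congrArg Fin.val h.2

/-- The endpoints of an edge with non-zero flow are visited. -/
lemma flow_support (w : List (Fin m × Bool)) : ∀ e, flow R w e ≠ 0 →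
    (∃ k ≤ w.length, vtx R (w.take k) = e.1) ∧
    (∃ k ≤ w.length, vtx R (w.take k) = e.1 * vtx R [(e.2, true)]) := by
  induction w using List.reverseRecOn with
  | nil => intro e h; exact absurd (flow_nil R e) h
  | append_singleton u x ih =>
    intro e h
    obtain ⟨e₀, s, hs, he2, hv, hf, hne⟩ := flow_concat_eq R u x
    by_cases he : e = e₀
    · subst he
      rw [he2]
      have A : ∃ k ≤ (u ++ [x]).length, vtx R ((u ++ [x]).take k) = vtx R u :=
        ⟨u.length, by simp, by simp⟩
      have B : ∃ k ≤ (u ++ [x]).length, vtx R ((u ++ [x]).take k) = vtx R (u ++ [x]) :=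
        ⟨(u ++ [x]).length, le_rfl, by rw [List.take_length]⟩
      rcases hv with ⟨h1, h2⟩ | ⟨h1, h2⟩
      · rw [h2, h1]; exact ⟨A, B⟩
      · rw [h2, h1]; exact ⟨B, A⟩
    · rw [hne e he] at h
      obtain ⟨⟨k, hk, h1⟩, ⟨l, hl, h2⟩⟩ := ih e h
      refine ⟨⟨k, by simp; omega, ?_⟩, ⟨l, by simp; omega, ?_⟩⟩
      · rw [List.take_append_of_le_length hk, h1]
      · rw [List.take_append_of_le_length hl, h2]

lemma flow_sum_le (w : List (Fin m × Bool)) (S : Finset ((FreeGroup (Fin m) ⧸ R) × Fin m)) :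
    ∑ e ∈ S, |flow R w e| ≤ w.length := by
  classical
  induction w using List.reverseRecOn with
  | nil => simp [flow_nil]
  | append_singleton u x ih =>
    obtain ⟨e₀, s, hs, he2, hv, hf, hne⟩ := flow_concat_eq R u x
    have : ∀ e ∈ S, |flow R (u ++ [x]) e| ≤ |flow R u e| + if e = e₀ then 1 else 0 := by
      intro e _
      by_cases he : e = e₀
      · subst he
        rw [hf, if_pos rfl, ← hs]; exact abs_add_le _ _
      · rw [hne e he, if_neg he, add_zero]
    have h2 := Finset.sum_le_sum this
    rw [Finset.sum_add_distrib, Finset.sum_ite_eq'] at h2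
    have : (if e₀ ∈ S then (1 : ℤ) else 0) ≤ 1 := by split_ifs <;> simp
    simp only [List.length_append, List.length_singleton]
    push_cast
    linarith

variable {R}

lemma SelfAvoiding.of_append {u v : List (Fin m × Bool)} (h : SelfAvoiding R (u ++ v)) :
    SelfAvoiding R u := by
  intro i j hi hj hij
  apply h i j (by simp; omega) (by simp; omega)
  rwa [List.take_append_of_le_length hi, List.take_append_of_le_length hj]

lemma SelfAvoiding.tail {x} {v : List (Fin m × Bool)} (h : SelfAvoiding R (x :: v)) :
    SelfAvoiding R v := by
  intro i j hi hj hij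
  have := h (i + 1) (j + 1) (by simpa) (by simpa) (by
    change vtx R ([x] ++ v.take i) = vtx R ([x] ++ v.take j)
    rw [vtx_append, vtx_append]
    exact congrArg _ hij)
  omega

lemma exists_flow_sum (w : List (Fin m × Bool)) (h : SelfAvoiding R w) :
    ∃ S : Finset ((FreeGroup (Fin m) ⧸ R) × Fin m), (w.length : ℤ) ≤ ∑ e ∈ S, |flow R w e| := by
  classical
  induction w using List.reverseRecOn with
  | nil => exact ⟨∅, by simp⟩
  | append_singleton u x ih =>
    obtain ⟨S, hS⟩ := ih h.of_append
    obtain ⟨e₀, s, hs, he2, hv, hf, hne⟩ := flow_concat_eq R u x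
    have key : ∀ k ≤ u.length, vtx R (u.take k) ≠ vtx R (u ++ [x]) := by
      intro k hk hh
      have := h k (u ++ [x]).length (by simp; omega) le_rfl (by
        rw [List.take_append_of_le_length hk, List.take_length]; exact hh)
      simp at this; omega
    have h0 : flow R u e₀ = 0 := by
      by_contra hc
      obtain ⟨⟨k, hk, h1⟩, ⟨l, hl, h2⟩⟩ := flow_support R u e₀ hc
      rw [he2] at h2
      rcases hv with ⟨h3, h4⟩ | ⟨h3, h4⟩
      · exact key l hl (h2.trans h4)
      · exact key k hk (h1.trans h3)
    refine ⟨insert e₀ (S.erase e₀), ?_⟩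
    rw [Finset.sum_insert (Finset.notMem_erase _ _), hf, h0, zero_add, hs]
    have h5 : ∑ e ∈ S.erase e₀, |flow R (u ++ [x]) e| = ∑ e ∈ S, |flow R u e| := by
      rw [← Finset.sum_erase S (a := e₀) (by simp [h0])]
      exact Finset.sum_congr rfl fun e he => by rw [hne e (Finset.ne_of_mem_erase he)]
    rw [h5]
    simp only [List.length_append, List.length_singleton]
    push_cast
    linarith

lemma length_le_of_flow_eq {w v : List (Fin m × Bool)} (h : SelfAvoiding R w)
    (hf : flow R w = flow R v) : w.length ≤ v.length := by
  obtain ⟨S, hS⟩ := exists_flow_sum w h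
  rw [hf] at hS
  exact_mod_cast hS.trans (flow_sum_le R v S)

/-- For a self-avoiding word, flow along an edge at the identity comes from the first letter. -/
lemma flow_cons_edge0 {y} {v : List (Fin m × Bool)} (h : SelfAvoiding R (y :: v)) (x) :
    flow R (y :: v) (edge0 R x) = flow R [y] (edge0 R x) := by
  have h1 := flow_append R [y] v (edge0 R x)
  rw [List.singleton_append] at h1
  rw [h1, add_eq_left]
  by_contra hc
  obtain ⟨⟨k, hk, h1⟩, ⟨l, hl, h2⟩⟩ := flow_support R _ _ hc
  have key : ∀ k ≤ v.length, vtx R (v.take k) ≠ (vtx R [y])⁻¹ := by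
    intro k hk hh
    have := h (k + 1) 0 (by simpa) (by simp) (by
      change vtx R ([y] ++ v.take k) = 1
      rw [vtx_append, hh, mul_inv_cancel])
    omega
  obtain ⟨j, b⟩ := x
  cases b
  · apply key l hl
    rw [h2]
    have : vtx R [(j, false)] = (vtx R [(j, true)])⁻¹ := rfl
    simp [edge0, this]
  · apply key k hk
    rw [h1]
    simp [edge0]

lemma eq_of_mk_eq {w₁ : List (Fin m × Bool)} (h₁ : SelfAvoiding R w₁) :
    ∀ {w₂ : List (Fin m × Bool)}, SelfAvoiding R w₂ →
    (QuotientGroup.mk (FreeGroup.mk w₁) : FreeGroup (Fin m) ⧸ (⁅R, R⁆ : Subgroup _)) =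
      QuotientGroup.mk (FreeGroup.mk w₂) → w₁ = w₂ := by
  classical
  induction w₁ with
  | nil =>
    intro w₂ h₂ h
    have := length_le_of_flow_eq h₂ (flow_eq_of_mk_eq R h).symm
    simpa [eq_comm] using this
  | cons x u ih =>
    intro w₂ h₂ h
    have hf := flow_eq_of_mk_eq R h
    cases w₂ with
    | nil => simpa using length_le_of_flow_eq h₁ hf
    | cons y v =>
      have h3 := congrFun hf (edge0 R x)
      rw [flow_cons_edge0 h₁, flow_cons_edge0 h₂, flow_single, flow_single, if_pos rfl] at h3
      have hxy : x = y := by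
        obtain ⟨i, b⟩ := x
        obtain ⟨j, c⟩ := y
        split_ifs at h3 with h4
        · have h5 : i = j := congrArg Prod.snd h4
          subst h5
          cases b <;> cases c <;> simp [sgn] at h3 ⊢
        · cases b <;> simp [sgn] at h3
      subst hxy
      rw [ih h₁.tail h₂.tail]
      have e : ∀ z : List (Fin m × Bool),
          FreeGroup.mk (x :: z) = FreeGroup.mk [x] * FreeGroup.mk z := fun z => by
        rw [FreeGroup.mul_mk, List.singleton_append]
      rw [e, e, QuotientGroup.mk_mul, QuotientGroup.mk_mul] at h
      exact mul_left_cancel h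

lemma wordEval_mk (N : Subgroup (FreeGroup (Fin m))) [N.Normal] (w : List (Fin m × Bool)) :
    wordEval (fun i => (QuotientGroup.mk (FreeGroup.of i) : FreeGroup (Fin m) ⧸ N)) w =
      QuotientGroup.mk (FreeGroup.mk w) := by
  induction w with
  | nil => rfl
  | cons x u ih =>
    have e : FreeGroup.mk (x :: u) = FreeGroup.mk [x] * FreeGroup.mk u := by
      rw [FreeGroup.mul_mk, List.singleton_append]
    rw [e, QuotientGroup.mk_mul, ← ih]
    obtain ⟨j, b⟩ := x
    cases b <;> simp [wordEval] <;> rfl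

lemma wordLength_eq {w : List (Fin m × Bool)} (h : SelfAvoiding R w) :
    wordLength (fun i =>
        (QuotientGroup.mk (FreeGroup.of i) :
          FreeGroup (Fin m) ⧸ (⁅R, R⁆ : Subgroup _)))
      (QuotientGroup.mk (FreeGroup.mk w)) = w.length := by
  unfold wordLength
  apply le_antisymm
  · exact Nat.sInf_le ⟨w, rfl, wordEval_mk _ w⟩
  · refine le_csInf (Set.nonempty_of_mem (x := w.length) ⟨w, rfl, wordEval_mk _ w⟩) ?_
    rintro n ⟨v, rfl, hv⟩
    rw [wordEval_mk] at hv
    exact length_le_of_flow_eq h (flow_eq_of_mk_eq R hv.symm)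

end Helpers

/-- Let `R ⊴ F_m` and let `w₁, w₂` be words whose paths in the Cayley
graph of `F_m/R` are self-avoiding. If `w₁ ≠ w₂` then `w₁` and `w₂` represent distinct
elements of `F_m/R'`; moreover the path labelled by such a word in the Cayley graph of
`F_m/R'` is geodesic: the element of `F_m/R'` it represents has word length exactly the
length of the word. -/
theorem self_avoiding_words_distinct_and_geodesic (m : ℕ) (hm : 2 ≤ m)
    (R : Subgroup (FreeGroup (Fin m))) [R.Normal]
    (w₁ w₂ : List (Fin m × Bool))
    (h₁ : SelfAvoiding R w₁) (h₂ : SelfAvoiding R w₂) :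
    (w₁ ≠ w₂ →
      (QuotientGroup.mk (FreeGroup.mk w₁) :
          FreeGroup (Fin m) ⧸ (⁅R, R⁆ : Subgroup _)) ≠
        QuotientGroup.mk (FreeGroup.mk w₂)) ∧
    wordLength (fun i =>
        (QuotientGroup.mk (FreeGroup.of i) :
          FreeGroup (Fin m) ⧸ (⁅R, R⁆ : Subgroup _)))
      (QuotientGroup.mk (FreeGroup.mk w₁)) = w₁.length ∧
    wordLength (fun i =>
        (QuotientGroup.mk (FreeGroup.of i) :
          FreeGroup (Fin m) ⧸ (⁅R, R⁆ : Subgroup _)))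
      (QuotientGroup.mk (FreeGroup.mk w₂)) = w₂.length := by
  exact ⟨fun hne h => hne (eq_of_mk_eq h₁ h₂ h), wordLength_eq h₁, wordLength_eq h₂⟩
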